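/- Let R be a commutative ring and M an R-module. Then M is projective if and only if M is isomorphic to a direct sum of countably generated R-modules and M is flat and Mittag-Leffler. (Theorem 3.34, the Kaplansky–Raynaud–Gruson theorem.) -/

import Mathlib

universe u

open TensorProduct DirectSum

/-- The canonical map `M ⊗[R] (∏ i, Q i) →ₗ[R] ∏ i, (M ⊗[R] Q i)`,
determined by `m ⊗ (q_i)_i ↦ (m ⊗ q_i)_i`. -/
noncomputable def tensorPiMap (R : Type u) [CommRing R] (M : Type u) [AddCommGroup M]
    [Module R M] {ι : Type u} (Q : ι → Type u) [∀ i, AddCommGroup (Q i)]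
    [∀ i, Module R (Q i)] :
    (M ⊗[R] (∀ i, Q i)) →ₗ[R] ∀ i, M ⊗[R] Q i :=
  LinearMap.pi fun i => LinearMap.lTensor M (LinearMap.proj i)

/-- An `R`-module `M` is Mittag-Leffler if for every family `(Q i)` of `R`-modules the
canonical map `M ⊗[R] (∏ i, Q i) → ∏ i, (M ⊗[R] Q i)` is injective. -/
def IsMittagLeffler (R : Type u) [CommRing R] (M : Type u) [AddCommGroup M]
    [Module R M] : Prop :=
  ∀ (ι : Type u) (Q : ι → Type u) [∀ i, AddCommGroup (Q i)] [∀ i, Module R (Q i)],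
    Function.Injective (tensorPiMap R M Q)

/-- An `R`-module is flat Mittag-Leffler if it is flat and Mittag-Leffler. -/
def IsFlatMittagLeffler (R : Type u) [CommRing R] (M : Type u) [AddCommGroup M]
    [Module R M] : Prop :=
  Module.Flat R M ∧ IsMittagLeffler R M

/-!
A projective module is a retract of a free module with basis `ι`, and every element of `ι` lies in
a countable subset stable under taking supports of the idempotent. Adjoining these subsets along a
well-order of `ι` and splitting off one countably generated complement at a time decomposes the
module (Kaplansky). Flat Mittag-Leffler modules are closed under retracts and contain the free
modules.

Conversely it suffices that a countably generated flat Mittag-Leffler module `M` is projective.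
The Mittag-Leffler property provides every tensor in `Hom(F, R) ⊗ M`, `F` finite free, with a
smallest submodule of `Hom(F, R)` over which it is defined; thus a map from `F`, and by flatness
from any finite module, to `M` has a factorization dominated by all others. Hence, given a
surjection onto `M`, a section over a finitely generated submodule `A` which comes from a suitable
larger submodule extends, as far as its values on `A` are concerned, to every finitely generated
submodule. So the sections over finitely generated submodules which extend in this way can be
enlarged to contain the generators of `M` one after the other, and their union is a section
over `M`.
-/

theorem exists_countable_mem_closed {ι : Type*} {f : ι → Set ι}
    (hf : ∀ i, (f i).Countable) (i : ι) :
    ∃ C : Set ι, C.Countable ∧ i ∈ C ∧ ∀ j ∈ C, f j ⊆ C := by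
  let g : Set ι → Set ι := fun A => ⋃ j ∈ A, f j
  have hg : ∀ n, (g^[n] {i}).Countable := by
    intro n
    induction n with
    | zero => exact Set.countable_singleton i
    | succ n ih =>
      rw [Function.iterate_succ_apply']
      exact ih.biUnion fun j _ => hf j
  refine ⟨⋃ n, g^[n] {i}, Set.countable_iUnion hg, Set.mem_iUnion.2 ⟨0, rfl⟩, fun j hj => ?_⟩
  obtain ⟨n, hn⟩ := Set.mem_iUnion.1 hj
  refine Set.subset_iUnion_of_subset (n + 1) ?_
  rw [Function.iterate_succ_apply']
  exact Set.subset_biUnion_of_mem (u := f) hn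

section WellOrderedSup

variable {ι α : Type*} [LinearOrder ι] [CompleteLattice α] {a d : ι → α}

theorem iSupIndep_of_disjoint_biSup_lt [IsModularLattice α] [IsCompactlyGenerated α]
    (h : ∀ i, Disjoint (d i) (⨆ j < i, d j)) : iSupIndep d := by
  refine iSupIndep_iff_supIndep.2 fun s => ?_
  induction s using Finset.induction_on_max with
  | empty => exact Finset.supIndep_empty d
  | insert i s hlt ih =>
    have hle : s.sup d ≤ ⨆ j < i, d j := Finset.sup_le fun j hj => le_biSup d (hlt j hj)
    exact ih.insert ((h i).mono_right hle)

theorem biSup_lt_eq_of_biSup_lt_sup_eq [WellFoundedLT ι]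
    (h : ∀ i, (⨆ j < i, a j) ⊔ d i = (⨆ j < i, a j) ⊔ a i) (i : ι) :
    ⨆ j < i, d j = ⨆ j < i, a j := by
  induction i using WellFoundedLT.induction with
  | ind i ih =>
    refine le_antisymm (iSup₂_le fun j hj => ?_) (iSup₂_le fun j hj => ?_)
    · calc d j ≤ (⨆ k < j, a k) ⊔ a j := h j ▸ le_sup_right
        _ ≤ ⨆ k < i, a k :=
          sup_le (biSup_mono fun k hk => hk.trans hj) (le_biSup a hj)
    · calc a j ≤ (⨆ k < j, d k) ⊔ d j := by rw [ih j hj, h j]; exact le_sup_right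
        _ ≤ ⨆ k < i, d k :=
          sup_le (biSup_mono fun k hk => hk.trans hj) (le_biSup d hj)

theorem iSup_le_iSup_of_biSup_lt_sup_eq [WellFoundedLT ι]
    (h : ∀ i, (⨆ j < i, a j) ⊔ d i = (⨆ j < i, a j) ⊔ a i) : ⨆ i, a i ≤ ⨆ i, d i := by
  refine iSup_le fun i => ?_
  calc a i ≤ (⨆ j < i, d j) ⊔ d i := by
        rw [biSup_lt_eq_of_biSup_lt_sup_eq h, h i]; exact le_sup_right
    _ ≤ ⨆ j, d j := sup_le (iSup₂_le fun j _ => le_iSup d j) (le_iSup d i)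

end WellOrderedSup

section Kaplansky

variable {R : Type*} [Ring R] {M : Type*} [AddCommGroup M] [Module R M]
variable {ι : Type*} {v : ι → M} {s : M →ₗ[R] ι →₀ R} {A : Set ι}

open scoped Classical in
variable (v s A) in
/-- The endomorphism `m ↦ ∑ i ∈ A, (s m) i • v i` of `M`. When `s` is a section of the linear
combination map of `v` and `A` contains the supports of the `s (v i)`, `i ∈ A`, it is a projection
of `M` onto the span of the `v i`, `i ∈ A`. -/
noncomputable def truncation : M →ₗ[R] M :=
  Finsupp.linearCombination R v ∘ₗ (Finsupp.supported R R A).subtype ∘ₗ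
    Finsupp.restrictDom R R A ∘ₗ s

theorem truncation_mem_span (m : M) : truncation v s A m ∈ Submodule.span R (v '' A) := by
  classical
  rw [Finsupp.span_image_eq_map_linearCombination]
  exact Submodule.mem_map_of_mem (Finsupp.restrictDom R R A (s m)).2

theorem truncation_eq_self_of_mem_span (hs : ∀ m, Finsupp.linearCombination R v (s m) = m)
    (hA : ∀ i ∈ A, ↑(s (v i)).support ⊆ A) {m : M} (hm : m ∈ Submodule.span R (v '' A)) :
    truncation v s A m = m := by
  classical
  have hle : Submodule.span R (v '' A) ≤ LinearMap.eqLocus (truncation v s A) LinearMap.id := by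
    refine Submodule.span_le.2 (Set.forall_mem_image.2 fun i hi => ?_)
    have hfix : (s (v i)).filter (· ∈ A) = s (v i) :=
      (Finsupp.filter_eq_self_iff _ _).2 fun j hj => hA i hi (Finsupp.mem_support_iff.2 hj)
    simp [truncation, hfix, hs]
  exact hle hm

theorem disjoint_span_sub_truncation (hs : ∀ m, Finsupp.linearCombination R v (s m) = m)
    (hA : ∀ i ∈ A, ↑(s (v i)).support ⊆ A) (C : Set ι) :
    Disjoint (Submodule.span R ((fun i => v i - truncation v s A (v i)) '' C))
      (Submodule.span R (v '' A)) := by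
  have hker : Submodule.span R ((fun i => v i - truncation v s A (v i)) '' C) ≤
      LinearMap.ker (truncation v s A) := by
    refine Submodule.span_le.2 (Set.forall_mem_image.2 fun i _ => ?_)
    simp [truncation_eq_self_of_mem_span hs hA (truncation_mem_span (v i))]
  refine Submodule.disjoint_def.2 fun m hmC hmA => ?_
  rw [← truncation_eq_self_of_mem_span hs hA hmA, LinearMap.mem_ker.1 (hker hmC)]

theorem span_sup_span_sub_truncation (C : Set ι) :
    Submodule.span R (v '' A) ⊔ Submodule.span R ((fun i => v i - truncation v s A (v i)) '' C) =
      Submodule.span R (v '' A) ⊔ Submodule.span R (v '' C) := by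
  apply le_antisymm <;>
    refine sup_le le_sup_left (Submodule.span_le.2 (Set.forall_mem_image.2 fun i hi => ?_))
  · exact sub_mem (Submodule.mem_sup_right (Submodule.subset_span (Set.mem_image_of_mem v hi)))
      (Submodule.mem_sup_left (truncation_mem_span (v i)))
  · rw [← add_sub_cancel (truncation v s A (v i)) (v i)]
    exact add_mem (Submodule.mem_sup_left (truncation_mem_span (v i)))
      (Submodule.mem_sup_right (Submodule.subset_span (Set.mem_image_of_mem _ hi)))

theorem exists_iSupIndep_span_countable (hs : ∀ m, Finsupp.linearCombination R v (s m) = m) :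
    ∃ T : ι → Set M, (∀ i, (T i).Countable) ∧
      iSupIndep (fun i => Submodule.span R (T i)) ∧ ⨆ i, Submodule.span R (T i) = ⊤ := by
  obtain ⟨_, _⟩ := exists_wellFoundedLT ι
  choose C hC_countable hC_mem hC_closed using
    exists_countable_mem_closed fun i => (s (v i)).support.countable_toSet
  let A (i : ι) : Set ι := ⋃ j < i, C j
  have hA (i : ι) : ∀ k ∈ A i, ↑(s (v k)).support ⊆ A i := by
    refine fun k hk => ?_
    obtain ⟨j, hj, hkj⟩ := Set.mem_iUnion₂.1 hk
    exact (hC_closed j k hkj).trans (Set.subset_biUnion_of_mem (u := C) hj)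
  have hspan_A (i : ι) : Submodule.span R (v '' A i) = ⨆ j < i, Submodule.span R (v '' C j) := by
    rw [Set.image_iUnion₂, Submodule.span_iUnion₂]
  let T (i : ι) : Set M := (fun k => v k - truncation v s (A i) (v k)) '' C i
  have hsup (i : ι) : (⨆ j < i, Submodule.span R (v '' C j)) ⊔ Submodule.span R (T i) =
      (⨆ j < i, Submodule.span R (v '' C j)) ⊔ Submodule.span R (v '' C i) := by
    rw [← hspan_A]
    exact span_sup_span_sub_truncation (C i)
  refine ⟨T, fun i => (hC_countable i).image _, iSupIndep_of_disjoint_biSup_lt fun i => ?_, ?_⟩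
  · rw [biSup_lt_eq_of_biSup_lt_sup_eq hsup, ← hspan_A]
    exact disjoint_span_sub_truncation hs (hA i) (C i)
  · refine top_le_iff.1 (le_trans (fun m _ => ?_) (iSup_le_iSup_of_biSup_lt_sup_eq hsup))
    rw [← hs m]
    refine Submodule.sum_mem _ fun i _ => Submodule.smul_mem _ _ ?_
    exact Submodule.mem_iSup_of_mem i (Submodule.subset_span ⟨i, hC_mem i, rfl⟩)

end Kaplansky

theorem exists_linearEquiv_directSum_countablyGenerated_of_projective (R : Type*) [Ring R]
    (M : Type u) [AddCommGroup M] [Module R M] [Module.Projective R M] :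
    ∃ (ι : Type u) (Q : ι → ModuleCat.{u} R),
      (∀ i, ∃ S : Set (Q i : Type u), S.Countable ∧ Submodule.span R S = ⊤) ∧
        Nonempty (M ≃ₗ[R] ⨁ i, (Q i : Type u)) := by
  classical
  obtain ⟨s, hs⟩ := (Module.projective_def (R := R) (P := M)).1 inferInstance
  obtain ⟨T, hT, hindep, htop⟩ := exists_iSupIndep_span_countable hs
  have hinternal : DirectSum.IsInternal fun x => Submodule.span R (T x) :=
    DirectSum.isInternal_submodule_of_iSupIndep_of_iSup_eq_top hindep htop
  exact ⟨M, fun x => ModuleCat.of R (Submodule.span R (T x)),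
    fun x => ⟨_, (hT x).preimage Subtype.val_injective, Submodule.span_span_coe_preimage⟩,
    ⟨(LinearEquiv.ofBijective (DirectSum.coeLinearMap _) hinternal).symm⟩⟩

section MittagLeffler

variable {R : Type u} [CommRing R] {M N : Type u} [AddCommGroup M] [Module R M]
  [AddCommGroup N] [Module R N]

theorem isMittagLeffler_iff_forall_lTensor_proj_eq_zero :
    IsMittagLeffler R M ↔
      ∀ (ι : Type u) (Q : ι → Type u) [∀ i, AddCommGroup (Q i)] [∀ i, Module R (Q i)]
        (z : M ⊗[R] ∀ i, Q i),
        (∀ i, LinearMap.lTensor M (LinearMap.proj i : (∀ i, Q i) →ₗ[R] Q i) z = 0) → z = 0 := by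
  refine forall₄_congr fun ι Q _ _ => (injective_iff_map_eq_zero _).trans ?_
  exact forall_congr' fun z => imp_congr_left funext_iff

theorem IsMittagLeffler.of_retract (hM : IsMittagLeffler R M) (i : N →ₗ[R] M) (r : M →ₗ[R] N)
    (h : r ∘ₗ i = LinearMap.id) : IsMittagLeffler R N := by
  rw [isMittagLeffler_iff_forall_lTensor_proj_eq_zero] at hM ⊢
  intro ι Q _ _ z hz
  have hi : LinearMap.rTensor (∀ j, Q j) i z = 0 := hM ι Q _ fun j => by
    rw [← LinearMap.comp_apply, LinearMap.lTensor_comp_rTensor, ← LinearMap.rTensor_comp_lTensor,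
      LinearMap.comp_apply, hz j, map_zero]
  calc z = LinearMap.rTensor (∀ j, Q j) (r ∘ₗ i) z := by
        rw [h, LinearMap.rTensor_id, LinearMap.id_apply]
    _ = 0 := by rw [LinearMap.rTensor_comp_apply, hi, map_zero]

theorem isMittagLeffler_finsupp (X : Type u) : IsMittagLeffler R (X →₀ R) := by
  classical
  rw [isMittagLeffler_iff_forall_lTensor_proj_eq_zero]
  intro ι Q _ _ z hz
  have hsquare (j : ι) : (TensorProduct.finsuppScalarLeft R (Q j) X).toLinearMap ∘ₗ
      LinearMap.lTensor (X →₀ R) (LinearMap.proj j) =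
      Finsupp.mapRange.linearMap (LinearMap.proj j) ∘ₗ
        (TensorProduct.finsuppScalarLeft R (∀ j, Q j) X).toLinearMap := by
    ext
    simp
  refine (TensorProduct.finsuppScalarLeft R (∀ j, Q j) X).map_eq_zero_iff.1 ?_
  ext x j
  simpa [hz j] using (DFunLike.congr_fun (LinearMap.congr_fun (hsquare j) z) x).symm

theorem IsFlatMittagLeffler.of_retract (hM : IsFlatMittagLeffler R M) (i : N →ₗ[R] M)
    (r : M →ₗ[R] N) (h : r ∘ₗ i = LinearMap.id) : IsFlatMittagLeffler R N :=
  have := hM.1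
  ⟨Module.Flat.of_retract i r h, hM.2.of_retract i r h⟩

theorem IsFlatMittagLeffler.of_projective [Module.Projective R M] : IsFlatMittagLeffler R M := by
  obtain ⟨s, hs⟩ := (Module.projective_def' (R := R) (P := M)).1 inferInstance
  exact IsFlatMittagLeffler.of_retract ⟨inferInstance, isMittagLeffler_finsupp M⟩ s _ hs

/-- Every `E → E ⧸ S i` kills `ξ`, hence, by injectivity of `tensorPiMap`, so does
`E → ∏ i, E ⧸ S i`, whose kernel is `⨅ i, S i`. -/
theorem IsFlatMittagLeffler.mem_range_rTensor_iInf (hM : IsFlatMittagLeffler R M) {E : Type u}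
    [AddCommGroup E] [Module R E] {ι : Type u} {S : ι → Submodule R E} {ξ : E ⊗[R] M}
    (hξ : ∀ i, ξ ∈ LinearMap.range (LinearMap.rTensor M (S i).subtype)) :
    ξ ∈ LinearMap.range (LinearMap.rTensor M (⨅ i, S i).subtype) := by
  have := hM.1
  let q : E →ₗ[R] ∀ i, E ⧸ S i := LinearMap.pi fun i => (S i).mkQ
  have hexact : Function.Exact (⨅ i, S i).subtype q := by
    rw [LinearMap.exact_iff, Submodule.range_subtype, LinearMap.ker_pi]
    simp only [Submodule.ker_mkQ]
  refine (Module.Flat.rTensor_exact M hexact ξ).1 ?_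
  refine (TensorProduct.comm R (∀ i, E ⧸ S i) M).map_eq_zero_iff.1 ?_
  refine isMittagLeffler_iff_forall_lTensor_proj_eq_zero.1 hM.2 ι _ _ fun i => ?_
  obtain ⟨ζ, rfl⟩ := hξ i
  have hzero : LinearMap.proj i ∘ₗ q ∘ₗ (S i).subtype = 0 := by
    ext x
    simp [q]
  rw [← LinearMap.comm_comp_rTensor_comp_comm_eq]
  simp [← LinearMap.rTensor_comp_apply, hzero]

/-- The map `a` factors through the first map of every factorization of `f` over a finite projective
module. When `f` also factors through `a`, this is the domination condition by which Raynaud and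
Gruson characterize Mittag-Leffler modules. -/
def Stabilizes {A K : Type u} [AddCommGroup A] [Module R A] [AddCommGroup K] [Module R K]
    (f : A →ₗ[R] M) (a : A →ₗ[R] K) : Prop :=
  ∀ (G : Type u) [AddCommGroup G] [Module R G] [Module.Finite R G] [Module.Projective R G]
    (w : A →ₗ[R] G) (z : G →ₗ[R] M), z ∘ₗ w = f → ∃ t : G →ₗ[R] K, t ∘ₗ w = a

theorem mem_range_rTensor_range_dualMap {F G : Type*} [AddCommGroup F] [Module R F]
    [Module.Finite R F] [Module.Projective R F] [AddCommGroup G] [Module R G]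
    [Module.Finite R G] [Module.Projective R G] {w : F →ₗ[R] G} {z : G →ₗ[R] M}
    {ξ : Module.Dual R F ⊗[R] M} (h : z ∘ₗ w = dualTensorHom R F M ξ) :
    ξ ∈ LinearMap.range (LinearMap.rTensor M (LinearMap.range w.dualMap).subtype) := by
  obtain ⟨ζ, rfl⟩ := (dualTensorHom_bijective (R := R) (M := G) (N := M)).surjective z
  have hξ : LinearMap.rTensor M w.dualMap ζ = ξ :=
    (dualTensorHom_bijective (R := R) (M := F) (N := M)).injective <|
      (LinearMap.congr_fun (dualTensorHom_comp_rTensor_dualMap w) ζ).trans h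
  refine ⟨LinearMap.rTensor M w.dualMap.rangeRestrict ζ, ?_⟩
  rw [← LinearMap.rTensor_comp_apply, LinearMap.subtype_comp_codRestrict, hξ]

theorem IsFlatMittagLeffler.exists_stabilizes_of_projective (hM : IsFlatMittagLeffler R M)
    {F : Type u} [AddCommGroup F] [Module R F] [Module.Finite R F] [Module.Projective R F]
    (x : F →ₗ[R] M) :
    ∃ (n : ℕ) (a : F →ₗ[R] (Fin n → R)) (y : (Fin n → R) →ₗ[R] M),
      y ∘ₗ a = x ∧ Stabilizes x a := by
  obtain ⟨ξ, rfl⟩ := (dualTensorHom_bijective (R := R) (M := F) (N := M)).surjective x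
  let 𝒩 := {N : Submodule R (Module.Dual R F) //
    ξ ∈ LinearMap.range (LinearMap.rTensor M N.subtype)}
  obtain ⟨ζ, hζ⟩ : ξ ∈ LinearMap.range (LinearMap.rTensor M (⨅ N : 𝒩, N.1).subtype) :=
    hM.mem_range_rTensor_iInf fun N => N.2
  obtain ⟨n, a, y, rfl⟩ := TensorProduct.exists_sum_tmul_eq ζ
  refine ⟨n, LinearMap.pi fun j => (a j).1, Fintype.linearCombination R y, ?_, ?_⟩
  · ext m
    simp [← hζ, Fintype.linearCombination_apply]
  · intro G _ _ _ _ w z hwz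
    have ha (j : Fin n) : (a j).1 ∈ LinearMap.range w.dualMap :=
      Submodule.mem_iInf _ |>.1 (a j).2 (⟨_, mem_range_rTensor_range_dualMap hwz⟩ : 𝒩)
    choose t ht using ha
    refine ⟨LinearMap.pi t, ?_⟩
    ext m j
    exact LinearMap.congr_fun (ht j) m

theorem IsFlatMittagLeffler.exists_stabilizes (hM : IsFlatMittagLeffler R M)
    {A : Type u} [AddCommGroup A] [Module R A] [Module.Finite R A] (f : A →ₗ[R] M) :
    ∃ (n : ℕ) (a : A →ₗ[R] (Fin n → R)) (y : (Fin n → R) →ₗ[R] M),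
      y ∘ₗ a = f ∧ Stabilizes f a := by
  have := hM.1
  obtain ⟨m, u, hu⟩ := Module.Finite.exists_fin' R A
  obtain ⟨n, b, y, hyb, hb⟩ := hM.exists_stabilizes_of_projective (f ∘ₗ u)
  have hker : LinearMap.ker u ≤ LinearMap.ker b := by
    intro r hr
    have hfr : (f ∘ₗ u) r = 0 := by rw [LinearMap.comp_apply, LinearMap.mem_ker.1 hr, map_zero]
    obtain ⟨k, w, z, hwz, hwr⟩ :=
      Module.Flat.exists_factorization_of_apply_eq_zero_of_free hfr
    obtain ⟨t, rfl⟩ := hb _ w z hwz.symm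
    rw [LinearMap.mem_ker, LinearMap.comp_apply, hwr, map_zero]
  let a : A →ₗ[R] (Fin n → R) :=
    (LinearMap.ker u).liftQ b hker ∘ₗ (u.quotKerEquivOfSurjective hu).symm.toLinearMap
  have hau : a ∘ₗ u = b := LinearMap.ext fun r => by simp [a]
  refine ⟨n, a, y, (LinearMap.cancel_right hu).1 ?_, fun G _ _ _ _ w z hwz => ?_⟩
  · rw [LinearMap.comp_assoc, hau, hyb]
  · obtain ⟨t, ht⟩ := hb G (w ∘ₗ u) z (by rw [← LinearMap.comp_assoc, hwz])
    exact ⟨t, (LinearMap.cancel_right hu).1 (by rw [LinearMap.comp_assoc, ht, hau])⟩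

end MittagLeffler

section PartialSection

variable {R : Type u} [CommRing R] {M P : Type u} [AddCommGroup M] [Module R M]
  [AddCommGroup P] [Module R P] {π : P →ₗ[R] M}

/-- A linear map to `P`, defined on a submodule of `M`, which is a section of `π` there. -/
def IsPartialSection (π : P →ₗ[R] M) (f : M →ₗ.[R] P) : Prop :=
  ∀ x : f.domain, π (f x) = x

theorem IsPartialSection.of_le {f g : M →ₗ.[R] P} (hg : IsPartialSection π g) (hfg : f ≤ g) :
    IsPartialSection π f := fun x => by
  rw [hfg.2 (y := ⟨x, hfg.1 x.2⟩) rfl, hg]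

theorem IsPartialSection.sSup {c : Set (M →ₗ.[R] P)} (hc : DirectedOn (· ≤ ·) c)
    (hne : c.Nonempty) (hsec : ∀ f ∈ c, IsPartialSection π f) :
    IsPartialSection π (LinearPMap.sSup c hc) := by
  rintro ⟨x, hx⟩
  obtain ⟨f, hfc, hxf⟩ := (LinearPMap.mem_domain_sSup_iff hne hc).1 hx
  exact (congrArg π (LinearPMap.sSup_apply hc hfc ⟨x, hxf⟩)).trans (hsec f hfc ⟨x, hxf⟩)

theorem IsFlatMittagLeffler.exists_lift_subtype_of_fg (hM : IsFlatMittagLeffler R M)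
    (hπ : Function.Surjective π) {C : Submodule R M} (hC : C.FG) :
    ∃ (m : ℕ) (c : C →ₗ[R] (Fin m → R)) (s : (Fin m → R) →ₗ[R] P),
      ∀ x, π (s (c x)) = x := by
  have := Module.Finite.iff_fg.2 hC
  obtain ⟨m, c, d, hdc, -⟩ := hM.exists_stabilizes C.subtype
  obtain ⟨s, hs⟩ := Module.projective_lifting_property π d hπ
  exact ⟨m, c, s, fun x => (LinearMap.congr_fun hs (c x)).trans (LinearMap.congr_fun hdc x)⟩

theorem IsFlatMittagLeffler.exists_isPartialSection_of_stabilizes (hM : IsFlatMittagLeffler R M)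
    (hπ : Function.Surjective π) {K : Type u} [AddCommGroup K] [Module R K] {A C : Submodule R M}
    {α : A →ₗ[R] K} {b : K →ₗ[R] M} (hbα : b ∘ₗ α = A.subtype) (hα : Stabilizes A.subtype α)
    {h : M →ₗ.[R] P} (hh : IsPartialSection π h) (hbh : LinearMap.range b ≤ h.domain)
    (hC : C.FG) (hbC : LinearMap.range b ≤ C) :
    ∃ g : M →ₗ.[R] P, IsPartialSection π g ∧ h.domRestrict A ≤ g ∧ g.domain = C := by
  have hb (x : A) : b (α x) = x := LinearMap.congr_fun hbα x
  have hAC : A ≤ C := fun x hx => hbC ⟨α ⟨x, hx⟩, hb ⟨x, hx⟩⟩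
  obtain ⟨m, c, s, hs⟩ := hM.exists_lift_subtype_of_fg hπ hC
  obtain ⟨t, ht⟩ := hα _ (c ∘ₗ Submodule.inclusion hAC) (π ∘ₗ s) (LinearMap.ext fun x => hs _)
  let bh : K →ₗ[R] h.domain := Submodule.inclusion hbh ∘ₗ b.rangeRestrict
  let bC : K →ₗ[R] C := Submodule.inclusion hbC ∘ₗ b.rangeRestrict
  -- The section `s ∘ c` on `C` need not agree with `h` on `A`. The error `δ` takes values in
  -- `ker π`, and `t ∘ c` spreads it from `A` to `C`.
  let δ : K →ₗ[R] P := h.toFun ∘ₗ bh - s ∘ₗ c ∘ₗ bC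
  have hδ (r : K) : π (δ r) = 0 := by
    change π (h (bh r) - s (c (bC r))) = 0
    rw [map_sub, hh, hs]
    exact sub_self (b r)
  have hδα (x : A) (hx : (x : M) ∈ h.domain) (hx' : (x : M) ∈ C) :
      δ (α x) = h ⟨x, hx⟩ - s (c ⟨x, hx'⟩) := by
    have hbhα : bh (α x) = ⟨x, hx⟩ := Subtype.ext (hb x)
    have hbCα : bC (α x) = ⟨x, hx'⟩ := Subtype.ext (hb x)
    rw [← hbhα, ← hbCα]
    rfl
  refine ⟨⟨C, s ∘ₗ c + δ ∘ₗ t ∘ₗ c⟩, fun x => ?_, ⟨inf_le_left.trans hAC, ?_⟩, rfl⟩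
  · change π (s (c x) + δ (t (c x))) = x
    rw [map_add, hs, hδ, add_zero]
  · rintro ⟨x, hxA, hxh⟩ ⟨y, hy⟩ rfl
    have htα : t (c ⟨x, hy⟩) = α ⟨x, hxA⟩ := LinearMap.congr_fun ht ⟨x, hxA⟩
    change h ⟨x, hxh⟩ = s (c ⟨x, hy⟩) + δ (t (c ⟨x, hy⟩))
    rw [htα, hδα ⟨x, hxA⟩ hxh hy, add_sub_cancel]

theorem IsFlatMittagLeffler.exists_fg_forall_isPartialSection (hM : IsFlatMittagLeffler R M)
    (hπ : Function.Surjective π) {A : Submodule R M} (hA : A.FG) :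
    ∃ B : Submodule R M, B.FG ∧ A ≤ B ∧
      ∀ h : M →ₗ.[R] P, IsPartialSection π h → B ≤ h.domain → ∀ C : Submodule R M, C.FG →
        ∃ g : M →ₗ.[R] P, IsPartialSection π g ∧ h.domRestrict A ≤ g ∧ C ≤ g.domain := by
  have := Module.Finite.iff_fg.2 hA
  obtain ⟨k, α, b, hbα, hα⟩ := hM.exists_stabilizes A.subtype
  have hB : (LinearMap.range b).FG := Module.Finite.iff_fg.1 inferInstance
  have hAB : A ≤ LinearMap.range b := fun x hx => ⟨α ⟨x, hx⟩, LinearMap.congr_fun hbα ⟨x, hx⟩⟩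
  refine ⟨LinearMap.range b, hB, hAB, fun h hh hbh C hC => ?_⟩
  obtain ⟨g, hg, hle, hdom⟩ :=
    hM.exists_isPartialSection_of_stabilizes hπ hbα hα hh hbh (hC.sup hB) le_sup_right
  exact ⟨g, hg, hle, hdom ▸ le_sup_left⟩

/-- A partial section of `π` on a finitely generated submodule of `M` that can be extended to a
partial section on any larger finitely generated submodule. -/
structure IsExtendable (π : P →ₗ[R] M) (f : M →ₗ.[R] P) : Prop where
  fg_domain : f.domain.FG
  exists_le : ∀ C : Submodule R M, C.FG →
    ∃ g : M →ₗ.[R] P, IsPartialSection π g ∧ f ≤ g ∧ C ≤ g.domain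

theorem IsExtendable.isPartialSection {f : M →ₗ.[R] P} (hf : IsExtendable π f) :
    IsPartialSection π f :=
  have ⟨_, hg, hfg, _⟩ := hf.exists_le ⊥ Submodule.fg_bot
  hg.of_le hfg

theorem IsFlatMittagLeffler.isExtendable_bot (hM : IsFlatMittagLeffler R M)
    (hπ : Function.Surjective π) : IsExtendable π ⊥ where
  fg_domain := Submodule.fg_bot
  exists_le C hC :=
    have ⟨_, c, s, hs⟩ := hM.exists_lift_subtype_of_fg hπ hC
    ⟨⟨C, s ∘ₗ c⟩, hs, bot_le, le_rfl⟩

theorem IsFlatMittagLeffler.exists_isExtendable_mem_domain (hM : IsFlatMittagLeffler R M)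
    (hπ : Function.Surjective π) {f : M →ₗ.[R] P} (hf : IsExtendable π f) (x : M) :
    ∃ g, IsExtendable π g ∧ f ≤ g ∧ x ∈ g.domain := by
  let A : Submodule R M := f.domain ⊔ R ∙ x
  have hA : A.FG := hf.fg_domain.sup (Submodule.fg_span_singleton x)
  obtain ⟨B, hB, hAB, hext⟩ := hM.exists_fg_forall_isPartialSection hπ hA
  obtain ⟨h, hh, hfh, hBh⟩ := hf.exists_le B hB
  have hdom : (h.domRestrict A).domain = A := inf_eq_left.2 (hAB.trans hBh)
  refine ⟨h.domRestrict A, ⟨by rwa [hdom], hext h hh hBh⟩, ⟨?_, fun y z hyz => ?_⟩, ?_⟩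
  · rw [hdom]
    exact le_sup_left
  · exact hfh.2 hyz
  · rw [hdom]
    exact Submodule.mem_sup_right (Submodule.mem_span_singleton_self x)

theorem IsFlatMittagLeffler.exists_comp_eq_id_of_countable_span (hM : IsFlatMittagLeffler R M)
    (hπ : Function.Surjective π) {S : Set M} (hS : S.Countable)
    (hspan : Submodule.span R S = ⊤) : ∃ s : M →ₗ[R] P, π ∘ₗ s = LinearMap.id := by
  have := hS.toEncodable
  let p₀ : {f : M →ₗ.[R] P // IsExtendable π f} := ⟨⊥, hM.isExtendable_bot hπ⟩
  let 𝒟 (x : S) : Order.Cofinal {f : M →ₗ.[R] P // IsExtendable π f} :=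
    { carrier := {f | (x : M) ∈ f.1.domain}
      isCofinal := fun f =>
        have ⟨g, hg, hfg, hx⟩ := hM.exists_isExtendable_mem_domain hπ f.2 x
        ⟨⟨g, hg⟩, hx, hfg⟩ }
  let I := Order.idealOfCofinals p₀ 𝒟
  let c : Set (M →ₗ.[R] P) := Subtype.val '' (I : Set {f : M →ₗ.[R] P // IsExtendable π f})
  have hdir : DirectedOn (· ≤ ·) c := directedOn_image.2 I.directed
  let f := LinearPMap.sSup c hdir
  have hf : IsPartialSection π f := .sSup hdir (I.nonempty.image _) <|
    Set.forall_mem_image.2 fun f _ => f.2.isPartialSection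
  have htop : f.domain = ⊤ := by
    rw [eq_top_iff, ← hspan, Submodule.span_le]
    intro x hx
    obtain ⟨g, hxg, hgI⟩ := Order.cofinal_meets_idealOfCofinals p₀ 𝒟 ⟨x, hx⟩
    exact (LinearPMap.le_sSup hdir (Set.mem_image_of_mem _ hgI)).1 hxg
  exact ⟨f.toFun ∘ₗ (LinearEquiv.ofTop f.domain htop).symm, LinearMap.ext fun x => hf _⟩

theorem IsFlatMittagLeffler.projective_of_countable_span (hM : IsFlatMittagLeffler R M)
    {S : Set M} (hS : S.Countable) (hspan : Submodule.span R S = ⊤) : Module.Projective R M := by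
  obtain ⟨s, hs⟩ := hM.exists_comp_eq_id_of_countable_span
    (Finsupp.linearCombination_id_surjective R M) hS hspan
  exact Module.Projective.of_split s _ hs

end PartialSection

/-- **Theorem 3.34 (Kaplansky–Raynaud–Gruson)**: an `R`-module `M` is projective if and
only if `M` is isomorphic to a direct sum of countably generated modules and `M` is
flat and Mittag-Leffler. -/
theorem projective_iff_directSum_countablyGenerated_and_flat_mittagLeffler
    (R : Type u) [CommRing R] (M : Type u) [AddCommGroup M] [Module R M] :
    Module.Projective R M ↔
      ((∃ (ι : Type u) (Q : ι → ModuleCat.{u} R),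
          (∀ i, ∃ S : Set (Q i : Type u), S.Countable ∧ Submodule.span R S = ⊤) ∧
          Nonempty (M ≃ₗ[R] ⨁ i, (Q i : Type u))) ∧
        Module.Flat R M ∧ IsMittagLeffler R M) := by
  classical
  constructor
  · intro _
    exact ⟨exists_linearEquiv_directSum_countablyGenerated_of_projective R M,
      IsFlatMittagLeffler.of_projective⟩
  · rintro ⟨⟨ι, Q, hQ, ⟨e⟩⟩, hM⟩
    have hQ_projective (i : ι) : Module.Projective R (Q i) := by
      obtain ⟨S, hS, hspan⟩ := hQ i
      have hQ_flatML : IsFlatMittagLeffler R (Q i) :=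
        IsFlatMittagLeffler.of_retract hM (e.symm.toLinearMap ∘ₗ DirectSum.lof R ι (fun i => Q i) i)
          (DirectSum.component R ι (fun i => Q i) i ∘ₗ e.toLinearMap)
          (LinearMap.ext fun x => by simp [DirectSum.component.lof_self])
      exact hQ_flatML.projective_of_countable_span hS hspan
    exact Module.Projective.of_equiv' e.symm
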